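/- Let S = ⟨m, am+1, bm+t⟩ be a MANS-semigroup with embedding dimension 3, where m ≥ 3, a ≥ 1, t ∈ {2, …, m−1}, and (t−1)(am+1) < bm+t < t(am+1). Then the type of S satisfies t(S) = 1 if and only if t divides m. -/

import Mathlib

/-- `S ⊆ ℕ` is a numerical semigroup: contains `0`, closed under addition,
and has finite complement in `ℕ`. -/
def IsNumSgp (S : Set ℕ) : Prop :=
  0 ∈ S ∧ (∀ a ∈ S, ∀ b ∈ S, a + b ∈ S) ∧ Sᶜ.Finite

/-- `⟨A⟩`: the additive submonoid of `ℕ` generated by `A`, viewed as a set. -/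
def gen (A : Set ℕ) : Set ℕ := (AddSubmonoid.closure A : Set ℕ)

/-- The multiplicity `m(S)`: the least nonzero element of `S`. -/
noncomputable def nsMult (S : Set ℕ) : ℕ := sInf {x | x ∈ S ∧ x ≠ 0}

/-- The minimal system of generators of `S`: the nonzero elements of `S` that are
not a sum of two nonzero elements of `S`. -/
def msg (S : Set ℕ) : Set ℕ :=
  {x | x ∈ S ∧ x ≠ 0 ∧ ∀ a ∈ S, a ≠ 0 → ∀ b ∈ S, b ≠ 0 → x ≠ a + b}

/-- The ratio `r(S)`: the second smallest minimal generator of `S`. -/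
noncomputable def nsRatio (S : Set ℕ) : ℕ := sInf (msg S \ {nsMult S})

/-- The maximum minimal generator `M(S)`. -/
noncomputable def nsMaxGen (S : Set ℕ) : ℕ := sSup (msg S)

/-- The Apéry set `Ap(S, n) = {s ∈ S : s - n ∉ S}`. -/
def AperySet (S : Set ℕ) (n : ℕ) : Set ℕ :=
  {s | s ∈ S ∧ ¬ ∃ y ∈ S, y + n = s}

/-- `w(i)`: the least element of `S` congruent to `i` modulo `n`. -/
noncomputable def aperyW (S : Set ℕ) (n i : ℕ) : ℕ :=
  sInf {s | s ∈ S ∧ s % n = i % n}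

/-- A MANS-semigroup: a numerical semigroup whose Apéry set with respect to the
multiplicity is monotone, i.e. `w(1) < w(2) < ⋯ < w(m(S) - 1)`. -/
def IsMANS (S : Set ℕ) : Prop :=
  IsNumSgp S ∧ ∀ i : ℕ, 0 < i → i + 1 < nsMult S →
    aperyW S (nsMult S) i < aperyW S (nsMult S) (i + 1)

/-- The Frobenius number `F(S)`: the greatest integer not in `S`. -/
noncomputable def nsFrob (S : Set ℕ) : ℕ := sSup {x | x ∉ S}

/-- The genus `g(S)`: the number of gaps of `S`. -/
noncomputable def nsGenus (S : Set ℕ) : ℕ := Set.ncard {x | x ∉ S}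

/-- The set of pseudo-Frobenius numbers of `S`: integers `x ∉ S` such that
`x + s ∈ S` for every nonzero `s ∈ S`. -/
def nsPF (S : Set ℕ) : Set ℤ :=
  {x : ℤ | x ∉ ((Nat.cast : ℕ → ℤ) '' S) ∧
    ∀ s ∈ S, s ≠ 0 → x + (s : ℤ) ∈ ((Nat.cast : ℕ → ℤ) '' S)}

/-- The type `t(S)`: the number of pseudo-Frobenius numbers of `S`. -/
noncomputable def nsType (S : Set ℕ) : ℕ := (nsPF S).ncard

/-- `S` is pseudo-symmetric iff `F(S) = 2 g(S) - 2`. -/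
def IsPseudoSymmetric (S : Set ℕ) : Prop :=
  (nsFrob S : ℤ) = 2 * (nsGenus S : ℤ) - 2

def ff (t A B v : ℕ) : ℕ := (v % t) * A + (v / t) * B

theorem ff_eq (t A B c d : ℕ) (hc : c < t) : ff t A B (c + t * d) = c * A + d * B := by
  have ht : 0 < t := by omega
  unfold ff
  rw [Nat.add_mul_mod_self_left, Nat.mod_eq_of_lt hc, Nat.add_mul_div_left _ _ ht,
    Nat.div_eq_of_lt hc, zero_add]

theorem ff_rep (t v : ℕ) (ht : 0 < t) : ∃ c d, c < t ∧ v = c + t * d :=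
  ⟨v % t, v / t, Nat.mod_lt _ ht, (Nat.mod_add_div v t).symm⟩

theorem ff_mono (t A B : ℕ) (ht : 2 ≤ t) (hA : 0 < A) (h1 : (t - 1) * A < B) :
    StrictMono (ff t A B) := by
  apply strictMono_nat_of_lt_succ
  intro v
  obtain ⟨c, d, hc, rfl⟩ := ff_rep t v (by omega)
  rw [ff_eq _ _ _ _ _ hc]
  by_cases h : c + 1 < t
  · rw [show c + t * d + 1 = (c + 1) + t * d by ring, ff_eq _ _ _ _ _ h]
    nlinarith
  · have : c = t - 1 := by omega
    rw [show c + t * d + 1 = 0 + t * (d + 1) by rw [mul_add]; omega, ff_eq _ _ _ _ _ (by omega)]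
    subst this
    nlinarith

theorem ff_sub (t A B x y : ℕ) (ht : 2 ≤ t) (h2 : B < t * A) :
    ff t A B (x + t * y) ≤ x * A + y * B := by
  obtain ⟨c, d, hc, rfl⟩ := ff_rep t x (by omega)
  rw [show c + t * d + t * y = c + t * (d + y) by ring, ff_eq _ _ _ _ _ hc]
  nlinarith [Nat.mul_le_mul_left d h2.le]

theorem ff_mod (m a b t v : ℕ) :
    (m : ℤ) ∣ (ff t (a * m + 1) (b * m + t) v : ℤ) - v := by
  have h := Nat.mod_add_div v t
  refine ⟨(v % t : ℕ) * a + (v / t : ℕ) * b, ?_⟩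
  have h' : (v : ℤ) = (v % t : ℕ) + t * (v / t : ℕ) := by exact_mod_cast h.symm
  unfold ff
  push_cast at *
  linear_combination -h'

theorem mem_gen3 (m A B s : ℕ) : s ∈ gen {m, A, B} ↔ ∃ z x y, s = z * m + x * A + y * B := by
  unfold gen
  rw [SetLike.mem_coe]
  constructor
  · intro h
    induction h using AddSubmonoid.closure_induction with
    | mem x hx =>
      rcases hx with rfl | rfl | rfl
      · exact ⟨1, 0, 0, by ring⟩
      · exact ⟨0, 1, 0, by ring⟩
      · exact ⟨0, 0, 1, by ring⟩
    | zero => exact ⟨0, 0, 0, by ring⟩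
    | add x y _ _ hx hy =>
      obtain ⟨z, x, y, rfl⟩ := hx
      obtain ⟨z', x', y', rfl⟩ := hy
      exact ⟨z + z', x + x', y + y', by ring⟩
  · rintro ⟨z, x, y, rfl⟩
    have hg : ∀ g ∈ ({m, A, B} : Set ℕ), ∀ n : ℕ, n * g ∈ AddSubmonoid.closure {m, A, B} := by
      intro g hg n
      rw [← smul_eq_mul]
      exact AddSubmonoid.nsmul_mem _ (AddSubmonoid.subset_closure hg) n
    exact add_mem (add_mem (hg _ (by simp) _) (hg _ (by simp) _)) (hg _ (by simp) _)

theorem mem_int (m a b t : ℕ) (hm : 3 ≤ m) (ht2 : 2 ≤ t)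
    (h2 : b * m + t < t * (a * m + 1)) (x : ℤ) :
    x ∈ ((Nat.cast : ℕ → ℤ) '' gen {m, a * m + 1, b * m + t}) ↔
      ∃ v : ℕ, (ff t (a * m + 1) (b * m + t) v : ℤ) ≤ x ∧ (m : ℤ) ∣ x - v := by
  constructor
  · rintro ⟨s, hs, rfl⟩
    obtain ⟨z, x, y, rfl⟩ := (mem_gen3 _ _ _ _).1 hs
    refine ⟨x + t * y, ?_, ⟨z + x * a + y * b, ?_⟩⟩
    · have := ff_sub t (a * m + 1) (b * m + t) x y ht2 h2
      have h3 : ff t (a * m + 1) (b * m + t) (x + t * y) ≤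
        z * m + x * (a * m + 1) + y * (b * m + t) := by linarith [Nat.zero_le (z * m)]
      exact_mod_cast h3
    · push_cast; ring
  · rintro ⟨v, hv, hd⟩
    have h3 := dvd_sub hd (ff_mod m a b t v)
    rw [show x - (v : ℤ) - ((ff t (a * m + 1) (b * m + t) v : ℤ) - v)
      = x - ff t (a * m + 1) (b * m + t) v by ring] at h3
    obtain ⟨k, hk⟩ := h3
    have hk0 : 0 ≤ k := by
      by_contra hc
      have : (3 : ℤ) ≤ m := by exact_mod_cast hm
      nlinarith
    lift k to ℕ using hk0
    refine ⟨k * m + (v % t) * (a * m + 1) + (v / t) * (b * m + t),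
      (mem_gen3 _ _ _ _).2 ⟨_, _, _, rfl⟩, ?_⟩
    have : x = m * k + ff t (a * m + 1) (b * m + t) v := by linarith
    rw [this]
    unfold ff
    push_cast
    ring

set_option maxHeartbeats 1600000 in
theorem stmt13 (m a b t : ℕ) (hm : 3 ≤ m) (ha : 1 ≤ a) (ht2 : 2 ≤ t) (htm : t ≤ m - 1)
    (h1 : (t - 1) * (a * m + 1) < b * m + t) (h2 : b * m + t < t * (a * m + 1)) :
    nsType (gen {m, a * m + 1, b * m + t}) = 1 ↔ t ∣ m := by
  have hmem := mem_int m a b t hm ht2 h2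
  have hmod := ff_mod m a b t
  have hmono := ff_mono t (a * m + 1) (b * m + t) ht2 (by omega) h1
  have hadd : ∀ x y, x ∈ ((Nat.cast : ℕ → ℤ) '' gen {m, a * m + 1, b * m + t}) →
      y ∈ ((Nat.cast : ℕ → ℤ) '' gen {m, a * m + 1, b * m + t}) →
      x + y ∈ ((Nat.cast : ℕ → ℤ) '' gen {m, a * m + 1, b * m + t}) := by
    rintro _ _ ⟨x, hx, rfl⟩ ⟨y, hy, rfl⟩
    exact ⟨x + y, AddSubmonoid.add_mem _ hx hy, by push_cast; rfl⟩
  have hgen : ∀ z x y : ℕ, ((z * m + x * (a * m + 1) + y * (b * m + t) : ℕ) : ℤ) ∈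
      ((Nat.cast : ℕ → ℤ) '' gen {m, a * m + 1, b * m + t}) := fun z x y =>
    ⟨_, (mem_gen3 _ _ _ _).2 ⟨z, x, y, rfl⟩, rfl⟩
  have hms := mem_gen3 m (a * m + 1) (b * m + t)
  have hfeq := ff_eq t (a * m + 1) (b * m + t)
  have hAm : m < a * m + 1 := by nlinarith
  have hm1 : m * 1 + (b * m + t) ≤ t * (a * m + 1) := by
    have : b < t * a := by
      by_contra hc
      push Not at hc
      nlinarith [Nat.mul_le_mul_right m hc]
    nlinarith [Nat.mul_le_mul_right m this]
  have hB : ∀ i, ((ff t (a * m + 1) (b * m + t) i : ℕ) : ℤ) ∈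
      ((Nat.cast : ℕ → ℤ) '' gen {m, a * m + 1, b * m + t}) := fun i =>
    (hmem _).2 ⟨i, le_rfl, hmod i⟩
  unfold nsType nsPF
  generalize hAA : a * m + 1 = A at *
  generalize hBB : b * m + t = B at *
  generalize hSS : ((Nat.cast : ℕ → ℤ) '' gen {m, A, B}) = T at *
  set f := ff t A B with hf
  have hmZ : (3 : ℤ) ≤ m := by exact_mod_cast hm
  -- A
  have hnot : ∀ i, i < m → (f i : ℤ) - m ∉ T := by
    intro i hi hc
    obtain ⟨v, hv, hd⟩ := (hmem _).1 hc
    have hvi : v < i := hmono.lt_iff_lt.1 (by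
      have : (f v : ℤ) < f i := by linarith
      exact_mod_cast this)
    have h3 := dvd_sub hd (hmod i)
    have h4 : (m : ℤ) ∣ (i : ℤ) - v := by
      have := dvd_add h3 (dvd_refl (m : ℤ))
      have e : (f i : ℤ) - m - v - (f i - i) + m = i - v := by ring
      rw [e] at this
      exact this
    have := Int.le_of_dvd (by omega) h4
    omega
  have hPF : ∀ x : ℤ, x ∉ T → x + m ∈ T → x + A ∈ T → x + B ∈ T →
      x ∈ {x : ℤ | x ∉ T ∧ ∀ s ∈ gen {m, A, B}, s ≠ 0 → x + (s : ℤ) ∈ T} := by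
    intro x hx hxm hxA hxB
    refine ⟨hx, ?_⟩
    intro s hs hs0
    obtain ⟨z, u, y, rfl⟩ := (hms s).1 hs
    rcases z with _ | z
    · rcases u with _ | u
      · rcases y with _ | y
        · simp at hs0
        · have := hadd _ _ hxB (hgen 0 0 y)
          convert this using 1
          push_cast; ring
      · have := hadd _ _ hxA (hgen 0 u y)
        convert this using 1
        push_cast; ring
    · have := hadd _ _ hxm (hgen z u y)
      convert this using 1
      push_cast; ring
  have hform : ∀ x : ℤ, x ∉ T → x + m ∈ T → ∃ i, i < m ∧ x = f i - m := by
    intro x hx hxm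
    obtain ⟨v, hv, hd⟩ := (hmem _).1 hxm
    have hle : f (v % m) ≤ f v := hmono.monotone (Nat.mod_le _ _)
    refine ⟨v % m, Nat.mod_lt _ (by omega), ?_⟩
    have hvm : (v : ℤ) = (v % m : ℕ) + m * (v / m : ℕ) := by
      exact_mod_cast (Nat.mod_add_div v m).symm
    obtain ⟨k, hk⟩ := hd
    obtain ⟨l, hl⟩ := hmod (v % m)
    have hxe : x + m - f (v % m) = m * (k - l + (v / m : ℕ)) := by
      linear_combination hk - hl + hvm
    generalize (k - l + ((v / m : ℕ) : ℤ)) = j at hxe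
    have hle' : (f (v % m) : ℤ) ≤ f v := by exact_mod_cast hle
    have hj0 : 0 ≤ j := by
      by_contra hc
      nlinarith
    have hj1 : ¬ 1 ≤ j := by
      intro hc
      apply hx
      refine (hmem _).2 ⟨v % m, by nlinarith, ⟨j - 1 + l, ?_⟩⟩
      linear_combination hxe + hl
    have : j = 0 := by omega
    subst this
    linarith
  have hfr : (f (m - 1) : ℤ) - m ∈
      {x : ℤ | x ∉ T ∧ ∀ s ∈ gen {m, A, B}, s ≠ 0 → x + (s : ℤ) ∈ T} := by
    have hf1 : A ≤ f (m - 1) := by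
      have e := hfeq 1 0 (by omega)
      have : f 1 ≤ f (m - 1) := hmono.monotone (by omega)
      simp at e
      rw [e] at this
      exact this
    have hf1' : (m : ℤ) ≤ f (m - 1) := by exact_mod_cast (by omega : m ≤ f (m - 1))
    obtain ⟨l, hl⟩ := hmod (m - 1)
    rw [Nat.cast_sub (by omega)] at hl
    refine hPF _ (hnot _ (by omega)) ?_ ?_ ?_
    · rw [sub_add_cancel]; exact hB _
    · refine (hmem _).2 ⟨0, ?_, ⟨l + a, ?_⟩⟩
      · have e := hfeq 0 0 (by omega)
        simp at e
        rw [e]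
        push_cast
        linarith
      · rw [← hAA]
        push_cast at *
        linear_combination hl
    · refine (hmem _).2 ⟨t - 1, ?_, ⟨l + b, ?_⟩⟩
      · have e := hfeq (t - 1) 0 (by omega)
        simp at e
        rw [e]
        have : (((t - 1) * A : ℕ) : ℤ) < B := by exact_mod_cast h1
        linarith
      · rw [Nat.cast_sub (by omega), ← hBB]
        push_cast at *
        linear_combination hl
  constructor
  · intro hcard
    by_contra hnd
    obtain ⟨y, hy⟩ := Set.ncard_eq_one.1 hcard
    obtain ⟨r, q, hr, hq⟩ := ff_rep t (m - 1) (by omega)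
    have hq1 : 1 ≤ q := by
      by_contra hc
      have : q = 0 := by omega
      subst this
      omega
    obtain ⟨p, rfl⟩ : ∃ p, q = p + 1 := ⟨q - 1, by omega⟩
    have hr' : r ≠ t - 1 := by
      intro hc
      apply hnd
      refine ⟨p + 2, ?_⟩
      rw [mul_add] at *
      omega
    have ei := hfeq (t - 1) p (by omega)
    have e1 := hfeq 0 (p + 1) (by omega)
    have e2 := hfeq (t - 1) (p + 1) (by omega)
    rw [mul_add] at hq e1 e2
    have hi : (t - 1 + t * p) < m - 1 := by omega
    generalize hii : t - 1 + t * p = i at *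
    have htA : (t - 1) * A + A = t * A := by
      obtain ⟨t', rfl⟩ : ∃ t', t = t' + 1 := ⟨t - 1, by omega⟩
      simp; ring
    have h2nd : (f i : ℤ) - m ∈
        {x : ℤ | x ∉ T ∧ ∀ s ∈ gen {m, A, B}, s ≠ 0 → x + (s : ℤ) ∈ T} := by
      obtain ⟨l, hl⟩ := hmod i
      refine hPF _ (hnot _ (by omega)) ?_ ?_ ?_
      · rw [sub_add_cancel]; exact hB _
      · refine (hmem _).2 ⟨i + 1, ?_, ⟨l + a - 1, ?_⟩⟩
        · rw [show i + 1 = 0 + (t * p + t * 1) by omega]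
          rw [e1, ei]
          have : m + (0 * A + (p + 1) * B) ≤ (t - 1) * A + p * B + A := by nlinarith
          have h' : ((m + (0 * A + (p + 1) * B) : ℕ) : ℤ) ≤ (((t - 1) * A + p * B + A : ℕ) : ℤ) := by
            exact_mod_cast this
          rw [Nat.cast_add, Nat.cast_add ((t - 1) * A + p * B)] at h'
          linarith
        · rw [← hAA]
          push_cast at *
          linear_combination hl
      · have hu : m ≤ i + t := by omega
        obtain ⟨u, hu⟩ := Nat.exists_eq_add_of_le hu
        have hfi : f (i + t) = f i + B := by
          rw [show i + t = t - 1 + (t * p + t * 1) by omega, e2, ei]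
          ring
        have hlt : f u < f (i + t) := hmono (by omega)
        obtain ⟨l1, hl1⟩ := hmod u
        obtain ⟨l2, hl2⟩ := hmod (i + t)
        rw [hu] at hl2
        have hd : (f (i + t) : ℤ) - f u = m * (l2 - l1 + 1) := by
          rw [hu]
          push_cast at *
          linear_combination hl2 - hl1
        have hge : (m : ℤ) ≤ (f (i + t) : ℤ) - f u :=
          Int.le_of_dvd (by have : (f u : ℤ) < f (i + t) := by exact_mod_cast hlt
                            linarith) ⟨_, hd⟩
        rw [hfi] at hge hd
        push_cast at hge hd
        refine (hmem _).2 ⟨u, by linarith, ⟨l2, ?_⟩⟩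
        linear_combination hd + hl1
    rw [hy] at hfr h2nd
    have e : (f (m - 1) : ℤ) - m = f i - m := hfr.trans h2nd.symm
    have e' : f (m - 1) = f i := by
      have : (f (m - 1) : ℤ) = f i := by linarith
      exact_mod_cast this
    have := hmono.injective e'
    omega
  · rintro ⟨q, hq⟩
    rw [Set.ncard_eq_one]
    refine ⟨(f (m - 1) : ℤ) - m, ?_⟩
    apply Set.eq_singleton_iff_unique_mem.2
    refine ⟨hfr, ?_⟩
    rintro x ⟨hx, hxs⟩
    have hxm := hxs m ((hms m).2 ⟨1, 0, 0, by ring⟩) (by omega)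
    obtain ⟨i, hi, rfl⟩ := hform x hx hxm
    by_cases him : i = m - 1
    · rw [him]
    exfalso
    obtain ⟨c, d, hc, rfl⟩ := ff_rep t i (by omega)
    have hdq : d < q := by
      by_contra hcc
      push Not at hcc
      have := Nat.mul_le_mul_left t hcc
      omega
    obtain ⟨e, rfl⟩ := Nat.exists_eq_add_of_lt hdq
    have hm1e : m - 1 = (t - 1) + t * (d + e) := by
      rw [mul_add, mul_add] at hq
      rw [mul_add]
      omega
    have E1 := hfeq (t - 1) (d + e) (by omega)
    have E2 := hfeq c d hc
    obtain ⟨g, hg⟩ := Nat.exists_eq_add_of_le (by omega : c ≤ t - 1)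
    rw [← hm1e, hg] at E1
    have hs0 : g * A + e * B ≠ 0 := by
      intro h0
      have hlt : f (c + t * d) < f (m - 1) := hmono (by omega)
      rw [E1, E2] at hlt
      rw [add_mul, add_mul] at hlt
      omega
    have := hxs (g * A + e * B) ((hms _).2 ⟨0, g, e, by ring⟩) hs0
    apply hnot (m - 1) (by omega)
    convert this using 1
    rw [E1, E2]
    push_cast
    ring
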